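/- Let H be the complete s-uniform t-partite hypergraph with sides V_1, …, V_t, and in R = K[x_v : v ∈ V] let J = ⋂_{e ∈ E(H)} P_e, where P_e is the ideal generated by the variables {x_v : v ∈ e} (J is the Alexander dual of the edge ideal I(H)). Then the minimal number of generators of J equals the height of J if and only if t = s. -/

import Mathlib

open Finset

/-- The vertex set `V = V_1 ∪ ⋯ ∪ V_t` of the multipartite hypergraph with sides `Vs`. -/
def vertexSet {α : Type*} [DecidableEq α] {t : ℕ} (Vs : Fin t → Finset α) : Finset α :=
  Finset.univ.biUnion Vs

/-- `e` is an edge of the complete `s`-uniform `t`-partite hypergraph with sides `Vs`: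
`e ⊆ V`, `|e| = s`, and `|e ∩ V_i| ≤ 1` for every side. -/
def IsEdge {α : Type*} [DecidableEq α] {t : ℕ} (Vs : Fin t → Finset α) (s : ℕ)
    (e : Finset α) : Prop :=
  e ⊆ vertexSet Vs ∧ e.card = s ∧ ∀ i : Fin t, (e ∩ Vs i).card ≤ 1

/-- `F` is an independent set: a subset of `V` containing no edge. -/
def Indep {α : Type*} [DecidableEq α] {t : ℕ} (Vs : Fin t → Finset α) (s : ℕ)
    (F : Finset α) : Prop :=
  F ⊆ vertexSet Vs ∧ ∀ e : Finset α, IsEdge Vs s e → ¬ e ⊆ F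

/-- The edge ideal `I(H) = (∏_{v ∈ e} x_v : e ∈ E(H))` of the complete `s`-uniform
`t`-partite hypergraph, in the polynomial ring `K[x_v : v ∈ α]`. -/
noncomputable def edgeIdeal (K : Type*) [Field K] {α : Type*} [DecidableEq α] {t : ℕ}
    (Vs : Fin t → Finset α) (s : ℕ) : Ideal (MvPolynomial α K) :=
  Ideal.span {m : MvPolynomial α K |
    ∃ e : Finset α, IsEdge Vs s e ∧ m = ∏ v ∈ e, MvPolynomial.X v}

/-- The height of an ideal: the infimum of the heights (in the prime spectrum, ordered
by inclusion) of the primes minimal over it. -/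
noncomputable def idealHeight {R : Type*} [CommRing R] (I : Ideal R) : ℕ∞ :=
  ⨅ (p : PrimeSpectrum R) (_ : p.asIdeal ∈ I.minimalPrimes), Order.height p

/-- The minimal number of generators of an ideal: the least cardinality of a (finite)
generating set. -/
noncomputable def minNumGens {R : Type*} [CommRing R] (I : Ideal R) : ℕ :=
  sInf {n : ℕ | ∃ G : Finset R, G.card = n ∧ Ideal.span (G : Set R) = I}

/-- The Alexander dual of the edge ideal: `J = ⋂_{e ∈ E(H)} P_e`, where `P_e` is the
ideal generated by the variables `x_v`, `v ∈ e`. -/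
noncomputable def alexanderDualIdeal (K : Type*) [Field K] {α : Type*} [DecidableEq α]
    {t : ℕ} (Vs : Fin t → Finset α) (s : ℕ) : Ideal (MvPolynomial α K) :=
  ⨅ (e : Finset α) (_ : IsEdge Vs s e),
    Ideal.span ((fun v => (MvPolynomial.X v : MvPolynomial α K)) '' (e : Set α))


open MvPolynomial in
theorem aux_coeff {K : Type*} [Field K] {α : Type*} (A : Set (α →₀ ℕ))
    (hA : ∀ a ∈ A, ∀ b ∈ A, a ≤ b → a = b) (a : α →₀ ℕ) (ha : a ∈ A)
    (f g : MvPolynomial α K)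
    (hf : f ∈ Ideal.span ((fun m => monomial m (1 : K)) '' A)) :
    coeff a (g * f) = coeff 0 g * coeff a f := by
  classical
  rw [mem_ideal_span_monomial_image] at hf
  rw [coeff_mul]
  rw [Finset.sum_eq_single (0, a)]
  · rintro ⟨x, y⟩ hxy hne
    rw [Finset.HasAntidiagonal.mem_antidiagonal] at hxy
    simp only at hxy ⊢
    by_cases hy : coeff y f = 0
    · simp [hy]
    · exfalso
      obtain ⟨b, hb, hby⟩ := hf y (mem_support_iff.2 hy)
      have hya : y ≤ a := by rw [← hxy]; exact le_add_self
      have hba := hA b hb a ha (hby.trans hya)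
      subst hba
      have hyb : y = b := le_antisymm hya hby
      subst hyb
      have : x = 0 := by simpa using hxy
      exact hne (by rw [this])
  · intro h
    exact absurd (by simp) h

open MvPolynomial in
theorem aux_minNumGens {K : Type*} [Field K] {α : Type*} (A : Finset (α →₀ ℕ))
    (hA : ∀ a ∈ A, ∀ b ∈ A, a ≤ b → a = b) :
    minNumGens (Ideal.span ((fun m => monomial m (1 : K)) '' (A : Set (α →₀ ℕ)))) = A.card := by
  classical
  apply le_antisymm
  · apply Nat.sInf_le
    refine ⟨A.image (fun m => monomial m (1 : K)), ?_, by simp⟩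
    exact Finset.card_image_of_injective _ (monomial_left_injective one_ne_zero)
  · apply le_csInf
    · exact ⟨_, A.image (fun m => monomial m (1 : K)), rfl, by simp⟩
    rintro n ⟨G, rfl, hG⟩
    let L : MvPolynomial α K →ₗ[K] (A → K) := LinearMap.pi (fun a => lcoeff K a.1)
    have hL : ∀ f a, L f a = coeff a.1 f := fun f a => rfl
    have key : ∀ f ∈ Ideal.span (G : Set (MvPolynomial α K)),
        L f ∈ Submodule.span K ((G.image L : Finset (A → K)) : Set (A → K)) := by
      intro f hf
      induction hf using Submodule.span_induction with
      | mem x hx =>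
        exact Submodule.subset_span (by
          rw [Finset.coe_image]; exact Set.mem_image_of_mem _ hx)
      | zero => simp
      | add x y _ _ hx hy => rw [map_add]; exact add_mem hx hy
      | smul r x hx' hx =>
        have : L (r • x) = coeff 0 r • L x := by
          funext a
          rw [hL, smul_eq_mul]
          exact aux_coeff (A : Set (α →₀ ℕ)) hA a.1 a.2 x r (hG ▸ hx')
        rw [this]
        exact Submodule.smul_mem _ _ hx
    have top : Submodule.span K ((G.image L : Finset (A → K)) : Set (A → K)) = ⊤ := by
      rw [eq_top_iff, ← (Pi.basisFun K A).span_eq, Submodule.span_le]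
      rintro _ ⟨a, rfl⟩
      have h1 : L (monomial a.1 1) = Pi.basisFun K A a := by
        funext b
        rw [hL, coeff_monomial, Pi.basisFun_apply, Pi.single_apply]
        by_cases hab : b = a
        · simp [hab]
        · rw [if_neg hab, if_neg (fun h => hab (Subtype.ext h.symm))]
      rw [← h1]
      apply key
      rw [hG]
      exact Ideal.subset_span ⟨a.1, a.2, rfl⟩
    have h2 := finrank_span_finset_le_card (R := K) (G.image L)
    rw [Set.finrank, top, finrank_top, Module.finrank_pi, Fintype.card_coe] at h2
    exact h2.trans Finset.card_image_le

open MvPolynomial in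
theorem aux_prime (K : Type*) [Field K] {α : Type*} (e : Set α) :
    (Ideal.span ((fun v => (X v : MvPolynomial α K)) '' e)).IsPrime := by
  classical
  set P := Ideal.span ((fun v => (X v : MvPolynomial α K)) '' e) with hP
  let φ : MvPolynomial α K →ₐ[K] MvPolynomial α K := aeval (fun v => if v ∈ e then 0 else X v)
  have h1 : (Ideal.Quotient.mkₐ K P).comp φ = Ideal.Quotient.mkₐ K P := by
    apply MvPolynomial.algHom_ext
    intro v
    simp only [φ, AlgHom.comp_apply, aeval_X]
    split_ifs with hv
    · rw [map_zero]
      symm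
      exact Ideal.Quotient.eq_zero_iff_mem.2 (Ideal.subset_span ⟨v, hv, rfl⟩)
    · rfl
  have h2 : P = RingHom.ker φ := by
    apply le_antisymm
    · rw [hP, Ideal.span_le]
      rintro _ ⟨v, hv, rfl⟩
      simp [φ, RingHom.mem_ker, hv]
    · intro f hf
      have := DFunLike.congr_fun h1 f
      rw [AlgHom.comp_apply, RingHom.mem_ker.1 hf, map_zero] at this
      exact Ideal.Quotient.eq_zero_iff_mem.1 this.symm
  rw [h2]
  exact RingHom.ker_isPrime _

open MvPolynomial in
theorem aux_height_ge (K : Type*) [Field K] {α : Type*} [DecidableEq α] (e : Finset α) :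
    (e.card : ℕ∞) ≤ (Ideal.span ((fun v => (X v : MvPolynomial α K)) '' (e : Set α))).height := by
  induction e using Finset.induction_on with
  | empty => simp
  | insert a e ha ih =>
    have := aux_prime K (e : Set α)
    have := aux_prime K ((insert a e : Finset α) : Set α)
    rw [Finset.card_insert_of_notMem ha]
    rw [Nat.cast_add, Nat.cast_one]
    refine le_trans (by gcongr) (Ideal.height_add_one_le_of_lt_of_isPrime
      (I := Ideal.span ((fun v => (X v : MvPolynomial α K)) '' (e : Set α))) ?_)
    refine lt_of_le_of_ne (Ideal.span_mono (Set.image_mono (by simp))) ?_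
    intro h
    have h1 : (X a : MvPolynomial α K) ∈
        Ideal.span ((fun v => (X v : MvPolynomial α K)) '' (e : Set α)) := by
      rw [h]; exact Ideal.subset_span ⟨a, by simp, rfl⟩
    have h2 := mem_ideal_span_X_image.1 h1 (Finsupp.single a 1) (by simp [mem_support_iff])
    obtain ⟨i, hi, hi'⟩ := h2
    have : a = i := by
      by_contra hne
      exact hi' (by simp [Finsupp.single_apply, hne])
    subst this
    exact ha hi

theorem aux_idealHeight {R : Type*} [CommRing R] (I : Ideal R) : idealHeight I = I.height := by
  rw [Ideal.height_eq_inf_minimalPrimes, idealHeight]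
  apply le_antisymm
  · refine le_iInf₂ fun J hJ => ?_
    have := hJ.1.1
    refine (iInf₂_le (⟨J, this⟩ : PrimeSpectrum R) hJ).trans ?_
    rw [← PrimeSpectrum.height_eq_orderHeight]
  · refine le_iInf₂ fun p hp => ?_
    refine (iInf₂_le p.asIdeal hp).trans ?_
    rw [← PrimeSpectrum.height_eq_orderHeight]

theorem aux_exists_edge {α : Type*} [DecidableEq α] {t s : ℕ}
    (Vs : Fin t → Finset α)
    (hdisj : ∀ i j : Fin t, i ≠ j → Disjoint (Vs i) (Vs j))
    (F : Finset α) (B : Finset (Fin t)) (hB : B.card = s)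
    (h : ∀ i ∈ B, ∃ v ∈ Vs i, v ∉ F) : ∃ e, IsEdge Vs s e ∧ Disjoint e F := by
  classical
  rcases B.eq_empty_or_nonempty with rfl | ⟨i₀, hi₀⟩
  · exact ⟨∅, ⟨by simp, by simpa using hB, by simp⟩, by simp⟩
  obtain ⟨v₀, -, -⟩ := h i₀ hi₀
  have : Nonempty α := ⟨v₀⟩
  choose! c hc hcF using h
  have huniq : ∀ v i j, v ∈ Vs i → v ∈ Vs j → i = j := by
    intro v i j hi hj
    by_contra hij
    exact Finset.disjoint_left.1 (hdisj i j hij) hi hj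
  refine ⟨B.image c, ⟨?_, ?_, ?_⟩, ?_⟩
  · intro v hv
    obtain ⟨i, hi, rfl⟩ := Finset.mem_image.1 hv
    exact Finset.mem_biUnion.2 ⟨i, Finset.mem_univ _, hc i hi⟩
  · rw [Finset.card_image_of_injOn, hB]
    intro i hi j hj hij
    exact huniq (c i) i j (hc i hi) (by rw [hij]; exact hc j hj)
  · intro i
    rw [Finset.card_le_one]
    intro a ha b hb
    rw [Finset.mem_inter, Finset.mem_image] at ha hb
    obtain ⟨⟨j, hj, rfl⟩, hji⟩ := ha
    obtain ⟨⟨k, hk, rfl⟩, hki⟩ := hb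
    rw [huniq _ _ _ (hc j hj) hji, huniq _ _ _ (hc k hk) hki]
  · rw [Finset.disjoint_left]
    intro v hv
    obtain ⟨i, hi, rfl⟩ := Finset.mem_image.1 hv
    exact hcF i hi

/-- exponent of the product of the variables in the sides indexed by `S` -/
noncomputable def auxExp {α : Type*} [DecidableEq α] [Fintype α] {t : ℕ}
    (Vs : Fin t → Finset α) (S : Finset (Fin t)) : α →₀ ℕ :=
  Finsupp.equivFunOnFinite.symm (fun v => if v ∈ S.biUnion Vs then 1 else 0)

theorem auxExp_le {α : Type*} [DecidableEq α] [Fintype α] {t : ℕ}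
    (Vs : Fin t → Finset α) (S : Finset (Fin t)) (m : α →₀ ℕ) :
    auxExp Vs S ≤ m ↔ ∀ i ∈ S, ∀ v ∈ Vs i, m v ≠ 0 := by
  rw [Finsupp.le_def]
  simp only [auxExp, Finsupp.equivFunOnFinite_symm_apply_apply, Finset.mem_biUnion]
  constructor
  · intro h i hi v hv
    have := h v
    rw [if_pos ⟨i, hi, hv⟩] at this
    omega
  · intro h v
    split_ifs with h1
    · obtain ⟨i, hi, hv⟩ := h1
      have := h i hi v hv
      omega
    · exact Nat.zero_le _

theorem auxExp_anti {α : Type*} [DecidableEq α] [Fintype α] {t : ℕ}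
    (Vs : Fin t → Finset α)
    (hdisj : ∀ i j : Fin t, i ≠ j → Disjoint (Vs i) (Vs j))
    (hne : ∀ i : Fin t, (Vs i).Nonempty) (S T : Finset (Fin t))
    (h : auxExp Vs S ≤ auxExp Vs T) : S ⊆ T := by
  intro i hi
  obtain ⟨v, hv⟩ := hne i
  have := (auxExp_le Vs S _).1 h i hi v hv
  simp only [auxExp, Finsupp.equivFunOnFinite_symm_apply_apply, ne_eq, ite_eq_right_iff,
    one_ne_zero, imp_false, not_not, Finset.mem_biUnion] at this
  obtain ⟨j, hj, hvj⟩ := this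
  by_cases hij : i = j
  · rwa [hij]
  · exact absurd hvj (Finset.disjoint_left.1 (hdisj i j hij) hv)

theorem aux_cover {α : Type*} [DecidableEq α] [Fintype α] {t s : ℕ}
    (hs : 2 ≤ s) (hst : s ≤ t) (Vs : Fin t → Finset α)
    (hdisj : ∀ i j : Fin t, i ≠ j → Disjoint (Vs i) (Vs j)) (m : α →₀ ℕ) :
    (∀ e, IsEdge Vs s e → ∃ v ∈ e, m v ≠ 0) ↔
      ∃ S ∈ Finset.powersetCard (t + 1 - s) (Finset.univ : Finset (Fin t)), auxExp Vs S ≤ m := by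
  classical
  constructor
  · intro h
    let B : Finset (Fin t) := Finset.univ.filter (fun i => ∃ v ∈ Vs i, v ∉ m.support)
    have hB : B.card < s := by
      by_contra hB
      push Not at hB
      obtain ⟨B', hB', hc⟩ := Finset.exists_subset_card_eq hB
      obtain ⟨e, he, hd⟩ := aux_exists_edge Vs hdisj m.support B' hc
        (fun i hi => (Finset.mem_filter.1 (hB' hi)).2)
      obtain ⟨v, hv, hmv⟩ := h e he
      exact Finset.disjoint_left.1 hd hv (Finsupp.mem_support_iff.2 hmv)
    have hBc : t + 1 - s ≤ Bᶜ.card := by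
      rw [Finset.card_compl, Fintype.card_fin]; omega
    obtain ⟨S, hS, hc⟩ := Finset.exists_subset_card_eq hBc
    refine ⟨S, Finset.mem_powersetCard.2 ⟨Finset.subset_univ _, hc⟩, (auxExp_le _ _ _).2 ?_⟩
    intro i hi v hv hm
    have := hS hi
    rw [Finset.mem_compl] at this
    exact this (Finset.mem_filter.2 ⟨Finset.mem_univ _, v, hv, by simpa using hm⟩)
  · rintro ⟨S, hS, hSm⟩ e ⟨he1, he2, he3⟩
    rw [auxExp_le] at hSm
    have hSc := (Finset.mem_powersetCard.1 hS).2
    have hside : ∀ v ∈ e, ∃ i, v ∈ Vs i := by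
      intro v hv
      obtain ⟨i, -, hi⟩ := Finset.mem_biUnion.1 (he1 hv)
      exact ⟨i, hi⟩
    by_contra hcon
    push Not at hcon
    have : Nonempty (Fin t) := ⟨⟨0, by omega⟩⟩
    choose! c hc using hside
    have hmap : ∀ v ∈ e, c v ∈ Sᶜ := by
      intro v hv
      rw [Finset.mem_compl]
      intro hcS
      exact hSm (c v) hcS v (hc v hv) (hcon v hv)
    have hlt : Sᶜ.card < e.card := by
      rw [Finset.card_compl, Fintype.card_fin]; omega
    obtain ⟨x, hx, y, hy, hxy, hcxy⟩ := Finset.exists_ne_map_eq_of_card_lt_of_maps_to hlt hmap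
    exact hxy (Finset.card_le_one.1 (he3 (c x)) x (Finset.mem_inter.2 ⟨hx, hc x hx⟩) y
      (Finset.mem_inter.2 ⟨hy, hcxy ▸ hc y hy⟩))

open MvPolynomial in
theorem aux_dual_eq (K : Type*) [Field K] {α : Type*} [DecidableEq α] [Fintype α] {t s : ℕ}
    (hs : 2 ≤ s) (hst : s ≤ t) (Vs : Fin t → Finset α)
    (hdisj : ∀ i j : Fin t, i ≠ j → Disjoint (Vs i) (Vs j)) :
    alexanderDualIdeal K Vs s = Ideal.span ((fun m => monomial m (1 : K)) ''
      (((Finset.powersetCard (t + 1 - s) (Finset.univ : Finset (Fin t))).image (auxExp Vs) :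
        Finset (α →₀ ℕ)) : Set (α →₀ ℕ))) := by
  ext f
  rw [mem_ideal_span_monomial_image, alexanderDualIdeal]
  simp only [Submodule.mem_iInf]
  have h1 : ∀ e : Finset α, f ∈ Ideal.span ((fun v => (X v : MvPolynomial α K)) '' (e : Set α)) ↔
      ∀ m ∈ f.support, ∃ i ∈ e, m i ≠ 0 := fun e => mem_ideal_span_X_image
  simp only [h1]
  constructor
  · intro h m hm
    obtain ⟨S, hS, hSm⟩ := (aux_cover hs hst Vs hdisj m).1 (fun e he => h e he m hm)
    exact ⟨_, Finset.mem_coe.2 (Finset.mem_image_of_mem _ hS), hSm⟩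
  · intro h e he m hm
    obtain ⟨x, hx, hxm⟩ := h m hm
    obtain ⟨S, hS, rfl⟩ := Finset.mem_image.1 (Finset.mem_coe.1 hx)
    exact (aux_cover hs hst Vs hdisj m).2 ⟨S, hS, hxm⟩ e he

theorem aux_numGens (K : Type*) [Field K] {α : Type*} [DecidableEq α] [Fintype α] {t s : ℕ}
    (hs : 2 ≤ s) (hst : s ≤ t) (Vs : Fin t → Finset α)
    (hdisj : ∀ i j : Fin t, i ≠ j → Disjoint (Vs i) (Vs j))
    (hne : ∀ i : Fin t, (Vs i).Nonempty) :
    minNumGens (alexanderDualIdeal K Vs s) = t.choose (t + 1 - s) := by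
  rw [aux_dual_eq K hs hst Vs hdisj, aux_minNumGens, Finset.card_image_of_injective]
  · simp
  · intro S T h
    exact Finset.Subset.antisymm (auxExp_anti Vs hdisj hne S T h.le)
      (auxExp_anti Vs hdisj hne T S h.ge)
  · intro a ha b hb hab
    obtain ⟨S, hS, rfl⟩ := Finset.mem_image.1 ha
    obtain ⟨T, hT, rfl⟩ := Finset.mem_image.1 hb
    rw [Finset.eq_of_subset_of_card_le (auxExp_anti Vs hdisj hne S T hab)]
    rw [(Finset.mem_powersetCard.1 hS).2, (Finset.mem_powersetCard.1 hT).2]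

theorem aux_height (K : Type*) [Field K] {α : Type*} [DecidableEq α] [Fintype α] {t s : ℕ}
    (hst : s ≤ t) (Vs : Fin t → Finset α)
    (hdisj : ∀ i j : Fin t, i ≠ j → Disjoint (Vs i) (Vs j))
    (hne : ∀ i : Fin t, (Vs i).Nonempty) :
    idealHeight (alexanderDualIdeal K Vs s) = s := by
  classical
  rw [aux_idealHeight]
  apply le_antisymm
  · obtain ⟨B, -, hB⟩ := Finset.exists_subset_card_eq
      (s := (Finset.univ : Finset (Fin t))) (n := s) (by simpa using hst)
    obtain ⟨e, he, -⟩ := aux_exists_edge Vs hdisj ∅ B hB (fun i _ => by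
      obtain ⟨v, hv⟩ := hne i
      exact ⟨v, hv, by simp⟩)
    have hp := aux_prime K (e : Set α)
    refine (Ideal.height_mono (iInf₂_le e he)).trans ?_
    rw [← he.2.1]
    refine (Ideal.height_le_card_of_mem_minimalPrimes_span_finset
      (s := e.image (fun v => (MvPolynomial.X v : MvPolynomial α K))) ?_).trans ?_
    · rw [Finset.coe_image]
      rw [Ideal.minimalPrimes_eq_subsingleton_self]
      rfl
    · exact_mod_cast Finset.card_image_le
  · rw [Ideal.height_eq_inf_minimalPrimes]
    refine le_iInf₂ fun p hp => ?_
    have hpp := hp.1.1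
    have hle := hp.1.2
    have : (Finset.univ.filter (fun e : Finset α => IsEdge Vs s e)).inf
        (fun e => Ideal.span ((fun v => (MvPolynomial.X v : MvPolynomial α K)) '' (e : Set α)))
        ≤ p := by
      refine le_trans ?_ hle
      refine le_iInf₂ fun e he => ?_
      exact Finset.inf_le (f := fun e : Finset α =>
        Ideal.span ((fun v => (MvPolynomial.X v : MvPolynomial α K)) '' (e : Set α))) (by simpa using he)
    rw [Ideal.IsPrime.inf_le' hpp] at this
    obtain ⟨e, he, hep⟩ := this
    have he' := (Finset.mem_filter.1 he).2
    rw [← he'.2.1]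
    exact (aux_height_ge K e).trans (Ideal.height_mono hep)

/-- The minimal number of generators of the Alexander dual of the
edge ideal of the complete `s`-uniform `t`-partite hypergraph equals its height (i.e.
the Alexander dual is a complete intersection) if and only if `t = s`. -/
theorem alexander_dual_complete_intersection_iff
    (K : Type*) [Field K] {α : Type*} [DecidableEq α] [Fintype α] {t s : ℕ}
    (hs : 2 ≤ s) (hst : s ≤ t)
    (Vs : Fin t → Finset α)
    (hdisj : ∀ i j : Fin t, i ≠ j → Disjoint (Vs i) (Vs j))
    (hne : ∀ i : Fin t, (Vs i).Nonempty)
    (huniv : vertexSet Vs = Finset.univ) :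
    (minNumGens (alexanderDualIdeal K Vs s) : ℕ∞) =
        idealHeight (alexanderDualIdeal K Vs s) ↔
      t = s := by
  rw [aux_numGens K hs hst Vs hdisj hne, aux_height K hst Vs hdisj hne, Nat.cast_inj]
  constructor
  · intro h
    by_contra hts
    have hlt : s + 1 ≤ t := by omega
    have h1 : t.choose (t + 1 - s) = t.choose (s - 1) := by
      rw [← Nat.choose_symm (by omega : t + 1 - s ≤ t)]
      congr 1
      omega
    have h2 : (s + 1).choose (s - 1) ≤ t.choose (s - 1) := Nat.choose_le_choose _ hlt
    have h3 : (s + 1).choose (s - 1) = (s + 1).choose 2 := by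
      rw [← Nat.choose_symm (by omega : 2 ≤ s + 1)]
      congr 1
    have h4 : (s + 1).choose 2 = s + s.choose 2 := by
      rw [Nat.choose_succ_succ' s 1, Nat.choose_one_right]
    have h5 : 0 < s.choose 2 := Nat.choose_pos hs
    omega
  · rintro rfl
    simp
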